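/- Let f be an entire function of exponential type that is not identically zero, and set c := |h_f(π/2) + h_f(−π/2)|/2, where h_f is the indicator function of f. Let 0 < γ < π/2 and let Λ ⊆ {z ∈ ℂ : z ≠ 0, |arg(z)| < γ} be a set of zeros of f (that is, f(λ) = 0 for every λ ∈ Λ). Then the lower density of Λ satisfies ldens(Λ) ≤ c/(π·cos(γ)). -/

import Mathlib

open Filter Complex

/-- Support function `H_K(z) = sup { Re (z·u) : u ∈ K }` of a set `K ⊆ ℂ`. -/
noncomputable def suppFn (K : Set ℂ) (z : ℂ) : ℝ :=
  sSup ((fun u => (z * u).re) '' K)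

/-- The norm `‖f‖_{K,n} = sup_z |f z| · exp (−H_K z − |z|/n)`. -/
noncomputable def expNorm (K : Set ℂ) (n : ℕ) (f : ℂ → ℂ) : ℝ :=
  sSup (Set.range fun z : ℂ => ‖f z‖ * Real.exp (-(suppFn K z) - ‖z‖ / n))

/-- Membership in `Exp(K)`: `f` is entire and all the norms `‖f‖_{K,n}` are finite. -/
def MemExp (K : Set ℂ) (f : ℂ → ℂ) : Prop :=
  Differentiable ℂ f ∧ ∀ n : ℕ, 0 < n →
    BddAbove (Set.range fun z : ℂ => ‖f z‖ * Real.exp (-(suppFn K z) - ‖z‖ / n))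

open scoped Classical in
/-- Lower density of a set of natural numbers. -/
noncomputable def lowerDensity (A : Set ℕ) : ℝ :=
  liminf (fun N : ℕ =>
    (((Finset.range (N + 1)).filter (fun n => n ∈ A)).card : ℝ) / N) atTop

/-- Lower density of a discrete subset of `ℂ`. -/
noncomputable def ldensC (Λ : Set ℂ) : ℝ :=
  liminf (fun r : ℝ => (Nat.card {z : ℂ // z ∈ Λ ∧ ‖z‖ ≤ r} : ℝ) / r) atTop

/-- `f` is hypercyclic for the translation `T₁` on `Exp(K)`. -/
def HCExp (K : Set ℂ) (f : ℂ → ℂ) : Prop :=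
  MemExp K f ∧ ∀ g : ℂ → ℂ, MemExp K g → ∀ n : ℕ, 0 < n → ∀ ε > (0 : ℝ),
    ∃ k : ℕ, expNorm K n (fun z => f (z + (k : ℂ)) - g z) < ε

/-- `f` is frequently hypercyclic for the translation `T₁` on `Exp(K)`. -/
def FHCExp (K : Set ℂ) (f : ℂ → ℂ) : Prop :=
  MemExp K f ∧ ∀ g : ℂ → ℂ, MemExp K g → ∀ n : ℕ, 0 < n → ∀ ε > (0 : ℝ),
    0 < lowerDensity {k : ℕ | expNorm K n (fun z => f (z + (k : ℂ)) - g z) < ε}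

/-- `f` is hypercyclic (Birkhoff-universal) for `T₁` on `H(ℂ)`. -/
def HCEnt (f : ℂ → ℂ) : Prop :=
  Differentiable ℂ f ∧ ∀ g : ℂ → ℂ, Differentiable ℂ g → ∀ R > (0 : ℝ), ∀ ε > (0 : ℝ),
    ∃ k : ℕ, ∀ z : ℂ, ‖z‖ ≤ R → ‖f (z + (k : ℂ)) - g z‖ < ε

/-- `f` is frequently hypercyclic (frequently Birkhoff-universal) for `T₁` on `H(ℂ)`. -/
def FHCEnt (f : ℂ → ℂ) : Prop :=
  Differentiable ℂ f ∧ ∀ g : ℂ → ℂ, Differentiable ℂ g → ∀ R > (0 : ℝ), ∀ ε > (0 : ℝ),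
    0 < lowerDensity {k : ℕ | ∀ z : ℂ, ‖z‖ ≤ R → ‖f (z + (k : ℂ)) - g z‖ < ε}

/-- `f` is an entire function of (finite) exponential type. -/
def ExpType (f : ℂ → ℂ) : Prop :=
  Differentiable ℂ f ∧ ∃ C τ : ℝ, ∀ z : ℂ, ‖f z‖ ≤ C * Real.exp (τ * ‖z‖)

/-- The indicator function `h_f(θ) = limsup_{r→∞} log |f(r e^{iθ})| / r`. -/
noncomputable def indicatorFn (f : ℂ → ℂ) (θ : ℝ) : ℝ :=
  limsup (fun r : ℝ => Real.log ‖f ((r : ℂ) * Complex.exp (θ * Complex.I))‖ / r) atTop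

lemma zlog_cont {z : ℂ} (hz : 0 ≤ z.re) : ContinuousAt (fun z : ℂ => z * Complex.log z) z := by
  by_cases h0 : z = 0
  · subst h0
    have h1 : Tendsto (fun w : ℂ => |‖w‖ * Real.log ‖w‖| + ‖w‖ * Real.pi) (nhds 0) (nhds 0) := by
      have : Continuous (fun w : ℂ => |‖w‖ * Real.log ‖w‖| + ‖w‖ * Real.pi) := by
        have := Real.continuous_mul_log.comp (continuous_norm (E := ℂ))
        exact (this.abs).add (continuous_norm.mul continuous_const)
      simpa using this.tendsto 0
    rw [ContinuousAt]
    simp only [zero_mul]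
    refine squeeze_zero_norm (fun w => ?_) h1
    rw [norm_mul, abs_mul, abs_of_nonneg (norm_nonneg w), ← mul_add]
    refine mul_le_mul_of_nonneg_left ?_ (norm_nonneg w)
    calc ‖Complex.log w‖ ≤ |(Complex.log w).re| + |(Complex.log w).im| :=
          Complex.norm_le_abs_re_add_abs_im _
      _ ≤ _ := by
        rw [Complex.log_re, Complex.log_im]
        gcongr
        exact Complex.abs_arg_le_pi w
  · have : z ∈ Complex.slitPlane := by
      rw [Complex.mem_slitPlane_iff]
      by_contra hc
      push Not at hc
      exact h0 (Complex.ext (by simpa using le_antisymm hc.1 hz) (by simpa using hc.2))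
    exact continuousAt_id.mul (continuousAt_clog this)

lemma div_zeros (S : Finset ℂ) : ∀ F : ℂ → ℂ, Differentiable ℂ F → (∀ l ∈ S, F l = 0) →
    ∃ q : ℂ → ℂ, Differentiable ℂ q ∧ ∀ z, F z = q z * ∏ l ∈ S, (z - l) := by
  induction S using Finset.induction_on with
  | empty => intro F hF _; exact ⟨F, hF, by simp⟩
  | insert a S ha ih =>
    intro F hF h0
    have hd : Differentiable ℂ (dslope F a) := by
      rw [← differentiableOn_univ] at hF ⊢
      exact (Complex.differentiableOn_dslope Filter.univ_mem).2 hF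
    have hFa := h0 a (Finset.mem_insert_self _ _)
    have key : ∀ z, F z = (z - a) * dslope F a z := by
      intro z
      have := sub_smul_dslope F a z
      rw [hFa, sub_zero] at this
      simpa using this.symm
    obtain ⟨q, hq, h⟩ := ih (dslope F a) hd (by
      intro l hl
      have h1 := key l
      rw [h0 l (Finset.mem_insert_of_mem hl)] at h1
      rcases mul_eq_zero.1 h1.symm with h2 | h2
      · exact absurd (sub_eq_zero.1 h2 ▸ hl) ha
      · exact h2)
    refine ⟨q, hq, fun z => ?_⟩
    rw [key, h, Finset.prod_insert ha]; ring

lemma pl_bound (F : ℂ → ℂ) (hF : Differentiable ℂ F) (C τ s : ℝ)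
    (hb : ∀ z, ‖F z‖ ≤ C * Real.exp (τ * ‖z‖))
    (him : ∀ y : ℝ, ‖F (y * I)‖ ≤ C * Real.exp (s * |y|)) (z : ℂ) (hz : 0 ≤ z.re) :
    ‖F z‖ ≤ C * Real.exp (s * |z.im| + τ * z.re) := by
  have hn : ∀ (e : ℝ) (w : ℂ), ‖F w * Complex.exp ((e * s) * I * w - τ * w)‖
      = ‖F w‖ * Real.exp (-(e * s * w.im) - τ * w.re) := by
    intro e w
    rw [norm_mul, Complex.norm_exp]
    simp
  have hO : ∀ (e : ℝ) (l : Filter ℂ), ∃ c < (2 : ℝ), ∃ B,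
      (fun w => F w * Complex.exp ((e * s) * I * w - τ * w)) =O[l]
        fun z => Real.exp (B * ‖z‖ ^ c) := by
    intro e l
    refine ⟨1, by norm_num, τ + |e * s| + |τ|, Asymptotics.IsBigO.of_bound C (Eventually.of_forall fun w => ?_)⟩
    rw [hn, Real.norm_eq_abs, Real.abs_exp, Real.rpow_one]
    have h1 : -(e * s * w.im) ≤ |e * s| * ‖w‖ := by
      refine (neg_le_abs _).trans ?_
      rw [abs_mul]
      exact mul_le_mul_of_nonneg_left (Complex.abs_im_le_norm w) (abs_nonneg _)
    have h2 : -(τ * w.re) ≤ |τ| * ‖w‖ := by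
      refine (neg_le_abs _).trans ?_
      rw [abs_mul]
      exact mul_le_mul_of_nonneg_left (Complex.abs_re_le_norm w) (abs_nonneg _)
    calc ‖F w‖ * Real.exp (-(e * s * w.im) - τ * w.re)
        ≤ (C * Real.exp (τ * ‖w‖)) * Real.exp (|e * s| * ‖w‖ + |τ| * ‖w‖) := by
          refine mul_le_mul (hb w) (Real.exp_le_exp.2 (by linarith)) (Real.exp_pos _).le ((norm_nonneg _).trans (hb w))
      _ = _ := by rw [mul_assoc, ← Real.exp_add]; ring_nf
  have hd : ∀ (e : ℝ), Differentiable ℂ (fun w => F w * Complex.exp ((e * s) * I * w - τ * w)) := by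
    intro e; fun_prop
  have hre : ∀ (e : ℝ) (x : ℝ), 0 ≤ x →
      ‖(fun w => F w * Complex.exp ((e * s) * I * w - τ * w)) x‖ ≤ C := by
    intro e x hx
    simp only [hn]
    have := hb x
    rw [Complex.norm_real, Real.norm_of_nonneg hx] at this
    calc _ ≤ C * Real.exp (τ * x) * Real.exp (-(e * s * (x:ℂ).im) - τ * (x:ℂ).re) :=
          mul_le_mul_of_nonneg_right this (Real.exp_pos _).le
      _ = C := by rw [mul_assoc, ← Real.exp_add]; simp
  have himm : ∀ (e : ℝ) (y : ℝ), e * y = |y| →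
      ‖(fun w => F w * Complex.exp ((e * s) * I * w - τ * w)) (y * I)‖ ≤ C := by
    intro e y hy
    simp only [hn]
    calc _ ≤ C * Real.exp (s * |y|) * Real.exp (-(e * s * (y * I : ℂ).im) - τ * (y * I : ℂ).re) :=
          mul_le_mul_of_nonneg_right (him y) (Real.exp_pos _).le
      _ = C := by
        rw [mul_assoc, ← Real.exp_add, ← hy]; simp
        ring_nf; simp
  have fin : ∀ e : ℝ, e * z.im = |z.im| →
      ‖F z * Complex.exp ((e * s) * I * z - τ * z)‖ ≤ C →
      ‖F z‖ ≤ C * Real.exp (s * |z.im| + τ * z.re) := by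
    intro e he h
    rw [hn] at h
    calc ‖F z‖ = ‖F z‖ * Real.exp (-(e * s * z.im) - τ * z.re) * Real.exp (s * |z.im| + τ * z.re) := by
          rw [mul_assoc, ← Real.exp_add, ← he]; ring_nf; simp
      _ ≤ _ := mul_le_mul_of_nonneg_right h (Real.exp_pos _).le
  rcases le_total 0 z.im with h | h
  · refine fin 1 (by rw [abs_of_nonneg h, one_mul]) ?_
    exact PhragmenLindelof.quadrant_I
      (f := fun w => F w * Complex.exp (((1 : ℝ) * s) * I * w - τ * w)) (hd 1).diffContOnCl (hO 1 _) (hre 1)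
      (fun y hy => himm 1 y (by rw [abs_of_nonneg hy, one_mul])) hz h
  · refine fin (-1) (by rw [abs_of_nonpos h]; ring) ?_
    exact PhragmenLindelof.quadrant_IV
      (f := fun w => F w * Complex.exp (((-1 : ℝ) * s) * I * w - τ * w)) (hd (-1)).diffContOnCl (hO (-1) _) (hre (-1))
      (fun y hy => himm (-1) y (by rw [abs_of_nonpos hy]; ring)) hz h

lemma factor_upper (z l : ℂ) (R : ℝ) (hR : 0 < R) (hz : 0 ≤ z.re) (hl : ‖l‖ ≤ R)
    (h : z.re = 0 ∨ ‖z‖ = 2 * R) :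
    ‖z + (starRingEnd ℂ) l‖ ≤ ‖z - l‖ * Real.exp (2 * z.re / R) := by
  have e1 : ‖z + (starRingEnd ℂ) l‖ ^ 2 = ‖z - l‖ ^ 2 + 4 * z.re * l.re := by
    rw [Complex.sq_norm, Complex.sq_norm, Complex.normSq_apply, Complex.normSq_apply]
    simp; ring
  have e2 : 4 * z.re * l.re ≤ ‖z - l‖ ^ 2 * (4 * z.re / R) := by
    rcases h with h | h
    · simp [h]
    · have h1 : R ≤ ‖z - l‖ := by
        have := norm_sub_norm_le z l; linarith
      have h2 : l.re ≤ R := (Complex.re_le_norm l).trans hl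
      calc 4 * z.re * l.re ≤ 4 * z.re * R := by gcongr
        _ = R ^ 2 * (4 * z.re / R) := by field_simp
        _ ≤ _ := by gcongr
  refine abs_le_of_sq_le_sq' ?_ (by positivity) |>.2
  rw [mul_pow, ← Real.exp_nat_mul, e1]
  calc _ ≤ ‖z - l‖ ^ 2 * (4 * z.re / R + 1) := by linarith
    _ ≤ _ := by
      gcongr
      refine (Real.add_one_le_exp _).trans (le_of_eq ?_)
      congr 1; push_cast; ring

lemma factor_lower (x : ℝ) (l : ℂ) (hx : 0 < x) (hl0 : 0 < l.re) :
    ‖(x : ℂ) - l‖ * Real.exp (2 * x * l.re / (x ^ 2 + ‖l‖ ^ 2)) ≤ ‖(x : ℂ) + (starRingEnd ℂ) l‖ := by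
  by_cases hne : (x : ℂ) - l = 0
  · rw [hne]; simp
  have hpos : 0 < ‖(x : ℂ) - l‖ ^ 2 := by positivity
  set A := x ^ 2 + ‖l‖ ^ 2 with hA
  set B := 2 * x * l.re with hB
  have hB0 : 0 < B := by positivity
  have e1 : ‖(x : ℂ) + (starRingEnd ℂ) l‖ ^ 2 = A + B := by
    rw [hA, hB, Complex.sq_norm, Complex.sq_norm, Complex.normSq_apply, Complex.normSq_apply]
    simp; ring
  have e2 : ‖(x : ℂ) - l‖ ^ 2 = A - B := by
    rw [hA, hB, Complex.sq_norm, Complex.sq_norm, Complex.normSq_apply, Complex.normSq_apply]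
    simp; ring
  rw [e2] at hpos
  have hA0 : 0 < A := by linarith
  refine abs_le_of_sq_le_sq' ?_ (by positivity) |>.2
  rw [mul_pow, ← Real.exp_nat_mul, e1, e2]
  have h := Real.le_log_one_add_of_nonneg (x := 2 * B / (A - B)) (by positivity)
  have h3 : 2 * (2 * B / (A - B)) / (2 * B / (A - B) + 2) = 2 * (B / A) := by
    have : 2 * B / (A - B) + 2 = 2 * A / (A - B) := by field_simp; ring
    rw [this]; field_simp
  have h4 : 1 + 2 * B / (A - B) = (A + B) / (A - B) := by field_simp; ring
  rw [h3, h4, Real.le_log_iff_exp_le (by positivity), le_div_iff₀ hpos] at h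
  push_cast
  linarith

lemma arc_bound (s : ℝ) (z : ℂ) (hz : 0 ≤ z.re) :
    s * |z.im| - 2 * s / Real.pi * (z.arg * z.im) ≤ |s| * z.re := by
  have hpi := Real.pi_pos
  have ha := Complex.abs_arg_le_pi_div_two_iff.2 hz
  have h1 : z.arg * z.im = |z.arg| * |z.im| := by
    rcases le_total 0 z.im with h | h
    · rw [abs_of_nonneg h, abs_of_nonneg (Complex.arg_nonneg_iff.2 h)]
    · rcases h.lt_or_eq with h | h
      · rw [abs_of_neg h, abs_of_neg (Complex.arg_neg_iff.2 h)]; ring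
      · simp [h]
  have h2 : 0 ≤ 1 - 2 / Real.pi * |z.arg| := by
    have : 2 / Real.pi * |z.arg| ≤ 2 / Real.pi * (Real.pi / 2) := by gcongr
    have h : 2 / Real.pi * (Real.pi / 2) = 1 := by field_simp
    linarith
  have h3 : |z.im| * (1 - 2 / Real.pi * |z.arg|) ≤ z.re := by
    have h4 := Real.mul_le_sin (x := Real.pi / 2 - |z.arg|) (by linarith) (by linarith [abs_nonneg z.arg])
    rw [Real.sin_pi_div_two_sub, Real.cos_abs] at h4
    have h5 : 2 / Real.pi * (Real.pi / 2 - |z.arg|) = 1 - 2 / Real.pi * |z.arg| := by field_simp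
    rw [h5] at h4
    calc _ ≤ ‖z‖ * Real.cos z.arg := by
          gcongr
          exact Complex.abs_im_le_norm z
      _ = z.re := Complex.norm_mul_cos_arg z
  have h6 : 0 ≤ |z.im| * (1 - 2 / Real.pi * |z.arg|) := by positivity
  calc _ = s * (|z.im| * (1 - 2 / Real.pi * |z.arg|)) := by rw [h1]; ring
    _ ≤ |s| * (|z.im| * (1 - 2 / Real.pi * |z.arg|)) := by gcongr; exact le_abs_self s
    _ ≤ _ := by gcongr

lemma half_disc (F : ℂ → ℂ) (hF : Differentiable ℂ F) (C K s M R x : ℝ) (hx : 0 < x) (hxR : x < 2 * R)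
    (hb : ∀ z : ℂ, 0 ≤ z.re → ‖F z‖ ≤ C * Real.exp (s * |z.im| + K * z.re))
    (S : Finset ℂ) (hS : ∀ l ∈ S, F l = 0) (hSR : ∀ l ∈ S, ‖l‖ ≤ R) (hSre : ∀ l ∈ S, 0 < l.re)
    (hM : (S.card : ℝ) ≤ M * R) :
    ‖F x‖ * Real.exp (∑ l ∈ S, 2 * x * l.re / (x ^ 2 + ‖l‖ ^ 2)) ≤
      C * Real.exp (2 * s / Real.pi * (x * (Real.log (2 * R) - Real.log x)) + (K + 2 * M + |s|) * x) := by
  have hR : 0 < R := by linarith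
  have hC : 0 ≤ C := by
    have := (norm_nonneg _).trans (hb 0 (by simp))
    simpa using this
  obtain ⟨q, hq, hFq⟩ := div_zeros S F hF hS
  set L : ℝ := Real.log (2 * R) with hL
  set k : ℝ := 2 * s / Real.pi with hk
  set K' : ℝ := K + 2 * M + |s| with hK'
  set P : ℂ → ℂ := fun z => q z * ∏ l ∈ S, (z + (starRingEnd ℂ) l) with hP
  set G : ℂ → ℂ := fun z => P z * Complex.exp (-(k * (z * L - z * Complex.log z)) - K' * z) with hG
  have hPd : Differentiable ℂ P := by
    refine hq.mul ?_
    fun_prop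
  have hFn : ∀ z, ‖F z‖ = ‖q z‖ * ∏ l ∈ S, ‖z - l‖ := by
    intro z; rw [hFq, norm_mul, norm_prod]
  have hPn : ∀ z, ‖P z‖ = ‖q z‖ * ∏ l ∈ S, ‖z + (starRingEnd ℂ) l‖ := by
    intro z; rw [hP]; simp only; rw [norm_mul, norm_prod]
  have hGn : ∀ z, ‖G z‖ = ‖P z‖ * Real.exp (-(k * (z.re * (L - Real.log ‖z‖) + z.arg * z.im)) - K' * z.re) := by
    intro z
    simp only [hG]
    rw [norm_mul, Complex.norm_exp]
    congr 2
    simp only [Complex.sub_re, Complex.neg_re, Complex.mul_re, Complex.sub_im, Complex.mul_im,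
      Complex.ofReal_re, Complex.ofReal_im, Complex.log_re, Complex.log_im]
    ring
  set U : Set ℂ := {z | 0 < z.re ∧ ‖z‖ < 2 * R} with hU
  have hUo : IsOpen U :=
    (isOpen_lt continuous_const Complex.continuous_re).inter (isOpen_lt continuous_norm continuous_const)
  have hUc : closure U ⊆ {z | 0 ≤ z.re ∧ ‖z‖ ≤ 2 * R} := by
    refine closure_minimal (fun z hz => ⟨hz.1.le, hz.2.le⟩) ?_
    exact (isClosed_le continuous_const Complex.continuous_re).inter
      (isClosed_le continuous_norm continuous_const)
  have hUb : Bornology.IsBounded U :=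
    (Metric.isBounded_ball (x := (0:ℂ)) (r := 2 * R)).subset (fun z hz => by simpa using hz.2)
  have hGd : DiffContOnCl ℂ G U := by
    refine ⟨fun z hz => ?_, fun z hz => ?_⟩
    · have hzs : z ∈ Complex.slitPlane := Or.inl hz.1
      have h1 : DifferentiableAt ℂ Complex.log z := Complex.differentiableAt_log hzs
      have h2 := hPd z
      refine DifferentiableAt.differentiableWithinAt ?_
      simp only [hG]
      fun_prop
    · have h1 := zlog_cont (hUc hz).1
      have h2 := hPd.continuous.continuousAt (x := z)
      refine ContinuousAt.continuousWithinAt ?_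
      simp only [hG]
      fun_prop
  have hfr : ∀ z ∈ frontier U, ‖G z‖ ≤ C := by
    intro z hz
    rw [hUo.frontier_eq] at hz
    obtain ⟨hz1, hz2⟩ := hUc hz.1
    have hcase : z.re = 0 ∨ ‖z‖ = 2 * R := by
      by_contra hc
      push Not at hc
      exact hz.2 ⟨lt_of_le_of_ne hz1 (Ne.symm hc.1), lt_of_le_of_ne hz2 hc.2⟩
    have h0 : z.re * (L - Real.log ‖z‖) = 0 := by
      rcases hcase with h | h
      · simp [h]
      · simp [h, hL]
    have hPF : ‖P z‖ ≤ ‖F z‖ * Real.exp (2 * M * z.re) := by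
      rw [hPn, hFn]
      calc _ ≤ ‖q z‖ * ∏ l ∈ S, (‖z - l‖ * Real.exp (2 * z.re / R)) := by
            refine mul_le_mul_of_nonneg_left ?_ (norm_nonneg _)
            exact Finset.prod_le_prod (fun _ _ => norm_nonneg _)
              (fun l hl => factor_upper z l R hR hz1 (hSR l hl) hcase)
        _ = ‖q z‖ * (∏ l ∈ S, ‖z - l‖) * Real.exp (S.card * (2 * z.re / R)) := by
            rw [Finset.prod_mul_distrib, Finset.prod_const, ← Real.exp_nat_mul]; ring
        _ ≤ _ := by
            refine mul_le_mul_of_nonneg_left (Real.exp_le_exp.2 ?_) (by positivity)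
            calc _ ≤ M * R * (2 * z.re / R) := by gcongr
              _ = _ := by field_simp
    rw [hGn, h0, zero_add]
    have hab := arc_bound s z hz1
    calc _ ≤ (C * Real.exp (s * |z.im| + K * z.re) * Real.exp (2 * M * z.re)) *
          Real.exp (-(k * (z.arg * z.im)) - K' * z.re) := by
          refine mul_le_mul_of_nonneg_right (hPF.trans ?_) (Real.exp_pos _).le
          exact mul_le_mul_of_nonneg_right (hb z hz1) (Real.exp_pos _).le
      _ = C * Real.exp (s * |z.im| + K * z.re + 2 * M * z.re + (-(k * (z.arg * z.im)) - K' * z.re)) := by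
          rw [mul_assoc, mul_assoc, ← Real.exp_add, ← Real.exp_add, ← add_assoc]
      _ ≤ C * Real.exp 0 := by
          gcongr
          rw [hK']; rw [← hk] at hab; nlinarith
      _ = C := by simp
  have hxU : (x : ℂ) ∈ closure U := subset_closure ⟨by simpa using hx, by simpa [abs_of_pos hx] using hxR⟩
  have hfin := Complex.norm_le_of_forall_mem_frontier_norm_le hUb hGd hfr hxU
  rw [hGn] at hfin
  have hxn : ‖(x:ℂ)‖ = x := by simp [abs_of_pos hx]
  rw [hxn, Complex.ofReal_re, Complex.ofReal_im, mul_zero, add_zero] at hfin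
  have hlow : ‖F x‖ * Real.exp (∑ l ∈ S, 2 * x * l.re / (x ^ 2 + ‖l‖ ^ 2)) ≤ ‖P x‖ := by
    rw [hFn, hPn, Real.exp_sum, mul_assoc, ← Finset.prod_mul_distrib]
    refine mul_le_mul_of_nonneg_left ?_ (norm_nonneg _)
    exact Finset.prod_le_prod (fun _ _ => by positivity) (fun l hl => factor_lower x l hx (hSre l hl))
  refine hlow.trans ?_
  calc ‖P x‖ = ‖P x‖ * Real.exp (-(k * (x * (L - Real.log x))) - K' * x) *
        Real.exp (k * (x * (L - Real.log x)) + K' * x) := by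
        rw [mul_assoc, ← Real.exp_add]; ring_nf; simp
    _ ≤ _ := mul_le_mul_of_nonneg_right hfin (Real.exp_pos _).le

lemma counting (S : ℕ → Finset ℂ) (Λ : Set ℂ) (hS : ∀ N z, z ∈ S N ↔ z ∈ Λ ∧ ‖z‖ ≤ N)
    (x ε δ : ℝ) (hε1 : ε ≤ 1) (hδ : 0 ≤ δ) (T : ℕ) (hT : 0 < T) (hxT : x ^ 2 ≤ ε * (T : ℝ) ^ 2)
    (hn : ∀ N : ℕ, T ≤ N → δ * N ≤ (S N).card) (N : ℕ) (hN : T ≤ N) :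
    (1 - ε) * ((S N).card / (N : ℝ) - (S T).card / (T : ℝ) + δ * (Real.log (N + 1) - Real.log (T + 1)))
      ≤ ∑ l ∈ S N, ‖l‖ / (x ^ 2 + ‖l‖ ^ 2) := by
  have hT0 : (0:ℝ) < T := by exact_mod_cast hT
  have hε0 : 0 ≤ ε := by
    by_contra h
    push Not at h
    nlinarith [sq_nonneg x, sq_pos_of_pos hT0]
  induction N, hN using Nat.le_induction with
  | base =>
    simp only [sub_self, mul_zero, add_zero]
    exact Finset.sum_nonneg (fun _ _ => by positivity)
  | succ N hN ih =>
    have hN0 : (0:ℝ) < N := by exact_mod_cast (lt_of_lt_of_le hT hN)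
    have hTN : (T:ℝ) ≤ N := by exact_mod_cast hN
    have hsub : S N ⊆ S (N+1) := by
      intro z hz
      rw [hS] at hz ⊢
      refine ⟨hz.1, hz.2.trans ?_⟩
      push_cast; linarith
    rw [← Finset.sum_sdiff hsub]
    have hcard : ((S (N+1) \ S N).card : ℝ) = (S (N+1)).card - (S N).card := by
      rw [Finset.card_sdiff_of_subset hsub, Nat.cast_sub (Finset.card_le_card hsub)]
    have hnew : ((S (N+1)).card - (S N).card : ℝ) * ((1 - ε) / (N + 1)) ≤
        ∑ l ∈ S (N+1) \ S N, ‖l‖ / (x ^ 2 + ‖l‖ ^ 2) := by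
      rw [← hcard, ← nsmul_eq_mul]
      refine Finset.card_nsmul_le_sum _ _ _ (fun l hl => ?_)
      rw [Finset.mem_sdiff, hS, hS] at hl
      obtain ⟨⟨hl1, hl2⟩, hl3⟩ := hl
      have hl4 : (N:ℝ) < ‖l‖ := by
        by_contra h
        exact hl3 ⟨hl1, not_lt.1 h⟩
      push_cast at hl2
      have hlp : 0 < ‖l‖ := hN0.trans hl4
      calc (1 - ε) / (N + 1) ≤ (1 - ε) / ‖l‖ := by
            apply div_le_div_of_nonneg_left (by linarith) hlp hl2
        _ ≤ _ := by
          rw [div_le_div_iff₀ hlp (by positivity)]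
          have : ε * (T:ℝ)^2 ≤ ε * ‖l‖^2 := by gcongr; linarith
          nlinarith [mul_nonneg hε0 (sq_nonneg x)]
    have hlog : Real.log (N + 1 + 1) - Real.log (N + 1) ≤ 1 / (N + 1) := by
      rw [← Real.log_div (by positivity) (by positivity)]
      have := Real.log_le_sub_one_of_pos (x := ((N:ℝ) + 1 + 1) / (N + 1)) (by positivity)
      refine this.trans (le_of_eq ?_)
      field_simp; ring
    have hmain : δ * (1 / (N + 1)) ≤ (S N).card / (N:ℝ) - (S N).card / ((N:ℝ) + 1) := by
      have h1 := hn N hN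
      have : (S N).card / (N:ℝ) - (S N).card / ((N:ℝ) + 1) = (S N).card / (N:ℝ) * (1 / (N + 1)) := by
        field_simp; ring
      rw [this]
      gcongr
      rwa [le_div_iff₀ hN0]
    have hlog2 := mul_le_mul_of_nonneg_left hlog hδ
    have h1 : 0 ≤ 1 - ε := by linarith
    have h5 := mul_le_mul_of_nonneg_left (hlog2.trans hmain) h1
    push_cast
    have h6 : ((S (N+1)).card - (S N).card : ℝ) * ((1 - ε) / (N + 1)) =
       (1 - ε) * ((S (N+1)).card / ((N:ℝ)+1) - (S N).card / ((N:ℝ) + 1)) := by field_simp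
    rw [h6] at hnew
    linarith

lemma axis_bound (F : ℂ → ℂ) (C τ s : ℝ)
    (hb : ∀ z, ‖F z‖ ≤ C * Real.exp (τ * ‖z‖)) (e : ℂ) (he : ‖e‖ = 1)
    (h : ∀ᶠ r : ℝ in atTop, ‖F (r * e)‖ ≤ Real.exp (s * r)) :
    ∃ C' : ℝ, ∀ y : ℝ, 0 ≤ y → ‖F (y * e)‖ ≤ C' * Real.exp (s * y) := by
  obtain ⟨y0, hy0⟩ := eventually_atTop.1 h
  have hC : 0 ≤ C := by
    have := (norm_nonneg _).trans (hb 0)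
    simpa using this
  refine ⟨1 + C * Real.exp (|τ - s| * |y0|), fun y hy => ?_⟩
  rcases le_total y0 y with hle | hle
  · refine (hy0 y hle).trans ?_
    rw [add_mul, one_mul]
    have : 0 ≤ C * Real.exp (|τ - s| * |y0|) * Real.exp (s * y) := by positivity
    linarith
  · have h1 := hb (y * e)
    rw [norm_mul, he, Complex.norm_real, Real.norm_of_nonneg hy, mul_one] at h1
    refine h1.trans ?_
    have h2 : τ * y ≤ |τ - s| * |y0| + s * y := by
      have : (τ - s) * y ≤ |τ - s| * |y0| := by
        have := le_abs_self (τ - s)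
        have h3 : y ≤ |y0| := hle.trans (le_abs_self _)
        calc (τ - s) * y ≤ |τ - s| * y := by gcongr
          _ ≤ _ := by gcongr
      linarith
    calc C * Real.exp (τ * y) ≤ C * Real.exp (|τ - s| * |y0| + s * y) := by gcongr
      _ = C * Real.exp (|τ - s| * |y0|) * Real.exp (s * y) := by rw [Real.exp_add]; ring
      _ ≤ _ := by
        rw [add_mul, one_mul]
        linarith [Real.exp_pos (s * y)]

lemma exists_pos_ne (f : ℂ → ℂ) (hf : Differentiable ℂ f) (hf0 : f ≠ 0) :
    ∃ x : ℝ, 0 < x ∧ f x ≠ 0 := by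
  by_contra hc
  push Not at hc
  apply hf0
  have ha : AnalyticOnNhd ℂ f Set.univ := fun z _ => hf.analyticAt z
  have hfreq : ∃ᶠ z in nhdsWithin (1:ℂ) {1}ᶜ, f z = 0 := by
    have ht : Tendsto (fun n : ℕ => (1 : ℂ) + ((1 / ((n : ℝ) + 1) : ℝ) : ℂ)) atTop (nhdsWithin (1:ℂ) {1}ᶜ) := by
      rw [tendsto_nhdsWithin_iff]
      constructor
      · have h1 := (Complex.continuous_ofReal.tendsto 0).comp (tendsto_one_div_add_atTop_nhds_zero_nat (𝕜 := ℝ))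
        simpa using h1.const_add (1:ℂ)
      · refine Eventually.of_forall fun n => ?_
        have : (1 / ((n : ℝ) + 1)) ≠ 0 := by positivity
        simp only [Set.mem_compl_iff, Set.mem_singleton_iff, add_eq_left, Complex.ofReal_eq_zero]
        exact this
    refine ht.frequently (Frequently.of_forall fun n => ?_)
    have := hc (1 + 1 / ((n : ℝ) + 1)) (by positivity)
    rw [← this]; congr 1; push_cast; ring
  have := ha.eqOn_zero_of_preconnected_of_frequently_eq_zero isPreconnected_univ (Set.mem_univ _) hfreq
  funext z
  exact this (Set.mem_univ z)

lemma main_bound (f : ℂ → ℂ) (hf : Differentiable ℂ f) (C τ : ℝ)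
    (hb : ∀ z, ‖f z‖ ≤ C * Real.exp (τ * ‖z‖)) (hf0 : f ≠ 0)
    (γ : ℝ) (hγ : γ < Real.pi / 2)
    (Λ : Set ℂ) (hΛ : Λ ⊆ {z : ℂ | z ≠ 0 ∧ |Complex.arg z| < γ})
    (hzero : ∀ l ∈ Λ, f l = 0)
    (S : ℕ → Finset ℂ) (hS : ∀ N z, z ∈ S N ↔ z ∈ Λ ∧ ‖z‖ ≤ N)
    (a1 a2 : ℝ) (h1 : ∀ᶠ r : ℝ in atTop, ‖f (r * I)‖ ≤ Real.exp (a1 * r))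
    (h2 : ∀ᶠ r : ℝ in atTop, ‖f (r * (-I))‖ ≤ Real.exp (a2 * r))
    (δ : ℝ) (hδ0 : 0 ≤ δ) (hδ : ∀ᶠ N : ℕ in atTop, δ * N ≤ (S N).card)
    (M : ℝ) (hM : ∃ᶠ N : ℕ in atTop, ((S N).card : ℝ) ≤ M * N)
    (ε : ℝ) (hε0 : 0 < ε) (hε1 : ε ≤ 1) (hγc : 0 ≤ Real.cos γ) :
    (1 - ε) * δ * Real.cos γ ≤ (a1 + a2) / (2 * Real.pi) := by
  set d : ℝ := (a1 - a2) / 2 with hd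
  set s : ℝ := (a1 + a2) / 2 with hs
  set F : ℂ → ℂ := fun z => f z * Complex.exp (d * I * z) with hF
  have hFn : ∀ z, ‖F z‖ = ‖f z‖ * Real.exp (-(d * z.im)) := by
    intro z; simp only [hF]; rw [norm_mul, Complex.norm_exp]; simp
  have hFd : Differentiable ℂ F := by simp only [hF]; fun_prop
  have hFb : ∀ z, ‖F z‖ ≤ C * Real.exp ((τ + |d|) * ‖z‖) := by
    intro z
    rw [hFn, add_mul, Real.exp_add, ← mul_assoc]
    refine mul_le_mul (hb z) (Real.exp_le_exp.2 ?_) (Real.exp_pos _).le ((norm_nonneg _).trans (hb z))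
    refine (neg_le_abs _).trans ?_
    rw [abs_mul]
    exact mul_le_mul_of_nonneg_left (Complex.abs_im_le_norm z) (abs_nonneg _)
  obtain ⟨C1, hC1⟩ := axis_bound F C (τ + |d|) s hFb I (by simp) (by
    filter_upwards [h1] with r hr
    rw [hFn]
    calc _ ≤ Real.exp (a1 * r) * Real.exp (-(d * (r * I : ℂ).im)) := by gcongr
      _ = _ := by
        rw [← Real.exp_add]; congr 1; simp; rw [hd, hs]; ring)
  obtain ⟨C2, hC2⟩ := axis_bound F C (τ + |d|) s hFb (-I) (by simp) (by
    filter_upwards [h2] with r hr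
    rw [hFn]
    calc _ ≤ Real.exp (a2 * r) * Real.exp (-(d * (r * (-I) : ℂ).im)) := by gcongr
      _ = _ := by
        rw [← Real.exp_add]; congr 1; simp; rw [hd, hs]; ring)
  set C' := max C (max C1 C2) with hC'
  have hPL := pl_bound F hFd C' (τ + |d|) s
    (fun z => (hFb z).trans (by gcongr; exact le_max_left _ _))
    (fun y => by
      rcases le_total 0 y with hy | hy
      · rw [abs_of_nonneg hy]
        refine (hC1 y hy).trans ?_
        gcongr; exact (le_max_left _ _).trans (le_max_right _ _)
      · rw [abs_of_nonpos hy]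
        have := hC2 (-y) (by linarith)
        have e : ((-y : ℝ) : ℂ) * (-I) = y * I := by push_cast; ring
        rw [e] at this
        refine this.trans ?_
        gcongr; exact (le_max_right _ _).trans (le_max_right _ _))
  set K := τ + |d| with hK
  obtain ⟨x, hx, hfx⟩ := exists_pos_ne f hf hf0
  have hFx : 0 < ‖F x‖ := by rw [hFn]; positivity
  have hC'0 : 0 < C' := by
    have := hFx.trans_le (hPL x (by simpa using hx.le))
    exact pos_of_mul_pos_left this (Real.exp_pos _).le
  -- threshold
  obtain ⟨T0, hT0⟩ := eventually_atTop.1 hδ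
  obtain ⟨T1, hT1⟩ := exists_nat_gt (x / ε)
  set T : ℕ := max T0 (max T1 1) with hT
  have hTpos : 0 < T := by omega
  have hT1' : (T1:ℝ) ≤ T := by exact_mod_cast (show T1 ≤ T by omega)
  have hxT : x ^ 2 ≤ ε * (T:ℝ) ^ 2 := by
    have h3 : x < T * ε := by
      rw [div_lt_iff₀ hε0] at hT1
      nlinarith
    have h4 : x ^ 2 ≤ (T * ε) ^ 2 := by gcongr
    have h5 : ε ^ 2 ≤ ε := by nlinarith
    have h6 : ε ^ 2 * (T:ℝ) ^ 2 ≤ ε * (T:ℝ) ^ 2 := by gcongr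
    nlinarith
  have hcnt := counting S Λ hS x ε δ hε1 hδ0 T hTpos hxT (fun N hN => hT0 N (by omega))
  have hre : ∀ l ∈ Λ, ‖l‖ * Real.cos γ ≤ l.re ∧ 0 < l.re := by
    intro l hl
    obtain ⟨hl0, hla⟩ := hΛ hl
    have hpi := Real.pi_pos
    have hn : 0 < ‖l‖ := norm_pos_iff.2 hl0
    have hc : Real.cos γ ≤ Real.cos l.arg := by
      rw [← Real.cos_abs l.arg]
      exact Real.cos_le_cos_of_nonneg_of_le_pi (abs_nonneg _) (by linarith) hla.le
    have hc0 : 0 < Real.cos l.arg := by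
      have := abs_lt.1 hla
      exact Real.cos_pos_of_mem_Ioo ⟨by linarith, by linarith⟩
    rw [← Complex.norm_mul_cos_arg l]
    exact ⟨by gcongr, by positivity⟩
  by_contra hcon
  push Not at hcon
  have hpi := Real.pi_pos
  set κ : ℝ := (1 - ε) * δ * Real.cos γ - s / Real.pi with hκ
  have hκ0 : 0 < κ := by
    have : s / Real.pi = (a1 + a2) / (2 * Real.pi) := by rw [hs]; field_simp
    rw [hκ, this]; linarith
  set E : ℝ := Real.log C' - Real.log ‖F x‖ +
    2 * s / Real.pi * (x * (Real.log 2 - Real.log x)) + (K + 2 * M + |s|) * x +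
    2 * x * Real.cos γ * (1 - ε) * ((S T).card / (T:ℝ) + δ * Real.log (T + 1)) with hE
  have hev : ∀ᶠ N : ℕ in atTop, E < 2 * x * κ * Real.log N := by
    have : Tendsto (fun N : ℕ => 2 * x * κ * Real.log N) atTop atTop :=
      (Real.tendsto_log_atTop.comp tendsto_natCast_atTop_atTop).const_mul_atTop (by positivity)
    exact this.eventually_gt_atTop E
  have hxN : ∀ᶠ N : ℕ in atTop, x < N := tendsto_natCast_atTop_atTop.eventually_gt_atTop x
  obtain ⟨N, hMN, hEN, hxN, hTN⟩ := (hM.and_eventually (hev.and (hxN.and (eventually_ge_atTop T)))).exists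
  have hN0 : (0:ℝ) < N := hx.trans hxN
  have hhd := half_disc F hFd C' K s M N x hx (by linarith) hPL (S N)
    (fun l hl => by simp only [hF]; rw [hzero l ((hS N l).1 hl).1, zero_mul])
    (fun l hl => ((hS N l).1 hl).2) (fun l hl => (hre l ((hS N l).1 hl).1).2) hMN
  have hlog := Real.log_le_log (by positivity) hhd
  rw [Real.log_mul hFx.ne' (Real.exp_pos _).ne', Real.log_mul hC'0.ne' (Real.exp_pos _).ne',
    Real.log_exp, Real.log_exp, Real.log_mul two_ne_zero hN0.ne'] at hlog
  have hsum : 2 * x * Real.cos γ * ∑ l ∈ S N, ‖l‖ / (x ^ 2 + ‖l‖ ^ 2) ≤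
      ∑ l ∈ S N, 2 * x * l.re / (x ^ 2 + ‖l‖ ^ 2) := by
    rw [Finset.mul_sum]
    refine Finset.sum_le_sum fun l hl => ?_
    rw [mul_div_assoc']
    have := (hre l ((hS N l).1 hl).1).1
    gcongr ?_ / _
    nlinarith
  have hc2 := mul_le_mul_of_nonneg_left (hcnt N hTN) (show 0 ≤ 2 * x * Real.cos γ by positivity)
  have hε' : 0 ≤ 1 - ε := by linarith
  have hc3 : 2 * x * Real.cos γ * ((1 - ε) * (0 - (S T).card / (T : ℝ) + δ * (Real.log N - Real.log (T + 1)))) ≤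
     2 * x * Real.cos γ * ((1 - ε) * ((S N).card / (N : ℝ) - (S T).card / (T : ℝ) + δ * (Real.log (N + 1) - Real.log (T + 1)))) := by
    have q1 : Real.log (N:ℝ) ≤ Real.log (N + 1) := Real.log_le_log hN0 (by linarith)
    have q2 : (0:ℝ) ≤ (S N).card / (N : ℝ) := by positivity
    gcongr
  have hfinal : 2 * x * κ * Real.log N ≤ E := by
    have e1 : 2 * x * κ * Real.log N = 2 * x * Real.cos γ * (1 - ε) * δ * Real.log N
        - 2 * s / Real.pi * x * Real.log N := by rw [hκ]; ring
    rw [e1, hE]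
    linarith
  linarith

theorem stmt6 (f : ℂ → ℂ) (hf : ExpType f) (hf0 : f ≠ 0)
    (γ : ℝ) (hγ0 : 0 < γ) (hγ : γ < Real.pi / 2)
    (Λ : Set ℂ) (hΛ : Λ ⊆ {z : ℂ | z ≠ 0 ∧ |Complex.arg z| < γ})
    (hzero : ∀ l ∈ Λ, f l = 0) :
    ldensC Λ ≤ (|indicatorFn f (Real.pi / 2) + indicatorFn f (-(Real.pi / 2))| / 2) /
      (Real.pi * Real.cos γ) := by
  have hpi := Real.pi_pos
  have hcos : 0 < Real.cos γ := Real.cos_pos_of_mem_Ioo ⟨by linarith, hγ⟩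
  obtain ⟨hfd, C, τ, hb⟩ := hf
  have hrhs : 0 ≤ (|indicatorFn f (Real.pi / 2) + indicatorFn f (-(Real.pi / 2))| / 2) /
      (Real.pi * Real.cos γ) := by positivity
  set n : ℝ → ℝ := fun r => (Nat.card {z : ℂ // z ∈ Λ ∧ ‖z‖ ≤ r} : ℝ) with hn
  set D : Set ℝ := {a | ∀ᶠ r : ℝ in atTop, a ≤ n r / r} with hD
  have hL : ldensC Λ = sSup D := by
    rw [ldensC, Filter.liminf_eq]
  rw [hL]
  have hD0 : (0:ℝ) ∈ D := by
    filter_upwards [eventually_gt_atTop (0:ℝ)] with r hr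
    simp only [hn]; positivity
  -- infinite case
  by_cases hfin : ∀ r : ℝ, {z : ℂ | z ∈ Λ ∧ ‖z‖ ≤ r}.Finite
  swap
  · push Not at hfin
    obtain ⟨r0, hr0⟩ := hfin
    refine (csSup_le ⟨0, hD0⟩ (fun a ha => ?_)).trans hrhs
    obtain ⟨r, hr1, hr2⟩ := (ha.and (eventually_ge_atTop r0)).exists
    have : Nat.card {z : ℂ // z ∈ Λ ∧ ‖z‖ ≤ r} = 0 := by
      have hinf : {z : ℂ | z ∈ Λ ∧ ‖z‖ ≤ r}.Infinite :=
        hr0.mono (fun z hz => ⟨hz.1, hz.2.trans hr2⟩)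
      have := hinf.to_subtype
      exact Nat.card_eq_zero_of_infinite (α := {z : ℂ | z ∈ Λ ∧ ‖z‖ ≤ r})
    simp only [hn, this] at hr1
    simpa using hr1
  by_cases hbd : BddAbove D
  swap
  · rw [Real.sSup_of_not_bddAbove hbd]; exact hrhs
  have hnc : ∀ r, n r = (hfin r).toFinset.card := by
    intro r
    simp only [hn]
    rw [← Set.ncard_eq_toFinset_card _ (hfin r)]; rfl
  have hmono : ∀ r r', r ≤ r' → n r ≤ n r' := by
    intro r r' h
    rw [hnc, hnc]
    exact_mod_cast Finset.card_le_card (by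
      intro z hz
      simp only [Set.Finite.mem_toFinset, Set.mem_setOf_eq] at hz ⊢
      exact ⟨hz.1, hz.2.trans h⟩)
  set S : ℕ → Finset ℂ := fun N => (hfin N).toFinset with hSdef
  have hS : ∀ N z, z ∈ S N ↔ z ∈ Λ ∧ ‖z‖ ≤ N := by intro N z; simp [hSdef]
  obtain ⟨M0, hM0⟩ := hbd
  have hM00 : 0 ≤ M0 := hM0 hD0
  have hfreq : ∃ᶠ r : ℝ in atTop, n r / r < M0 + 1 := by
    intro hc
    have : M0 + 1 ∈ D := by
      filter_upwards [hc] with r hr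
      exact not_lt.1 hr
    linarith [hM0 this]
  have hM : ∃ᶠ N : ℕ in atTop, ((S N).card : ℝ) ≤ (2 * (M0 + 1)) * N := by
    refine (tendsto_nat_floor_atTop (α := ℝ)).frequently ?_
    refine (hfreq.and_eventually (eventually_ge_atTop (1:ℝ))).mono ?_
    rintro r ⟨h1, h2⟩
    have hr : 0 < r := by linarith
    rw [div_lt_iff₀ hr] at h1
    have h3 : r ≤ 2 * (⌊r⌋₊ : ℝ) := by
      have := Nat.lt_floor_add_one r
      have h4 : (1:ℝ) ≤ (⌊r⌋₊ : ℝ) := by exact_mod_cast Nat.le_floor (by simpa using h2)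
      linarith
    have h5 := hmono _ _ (Nat.floor_le hr.le)
    rw [hnc] at h5
    change ((S ⌊r⌋₊).card : ℝ) ≤ _ at h5
    nlinarith
  -- indicators
  set A : ℝ → Set ℝ := fun θ => {a | ∀ᶠ r : ℝ in atTop,
    Real.log ‖f ((r : ℂ) * Complex.exp (θ * Complex.I))‖ / r ≤ a} with hA
  have hind : ∀ θ, indicatorFn f θ = sInf (A θ) := by
    intro θ; rw [indicatorFn, Filter.limsup_eq]
  have hAb : ∀ θ, ∀ a ∈ A θ, ∀ᶠ r : ℝ in atTop,
      ‖f ((r : ℂ) * Complex.exp (θ * Complex.I))‖ ≤ Real.exp (a * r) := by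
    intro θ a ha
    filter_upwards [ha, eventually_gt_atTop (0:ℝ)] with r hr hr0
    rw [div_le_iff₀ hr0] at hr
    rcases (norm_nonneg (f ((r : ℂ) * Complex.exp (θ * Complex.I)))).eq_or_lt with h | h
    · rw [← h]; exact (Real.exp_pos _).le
    · exact (Real.log_le_iff_le_exp h).1 hr
  have hAne : ∀ θ, (A θ).Nonempty := by
    intro θ
    refine ⟨|τ| + |Real.log C|, ?_⟩
    filter_upwards [eventually_ge_atTop (1:ℝ)] with r hr
    have hr0 : 0 < r := by linarith
    rw [div_le_iff₀ hr0]
    have h0 : 0 ≤ (|τ| + |Real.log C|) * r := by positivity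
    rcases (norm_nonneg (f ((r : ℂ) * Complex.exp (θ * Complex.I)))).eq_or_lt with h | h
    · rw [← h, Real.log_zero]; exact h0
    · have h1 := hb ((r : ℂ) * Complex.exp (θ * Complex.I))
      rw [norm_mul, Complex.norm_exp_ofReal_mul_I, mul_one, Complex.norm_real,
        Real.norm_of_nonneg hr0.le] at h1
      have hC : 0 < C := pos_of_mul_pos_left (h.trans_le h1) (Real.exp_pos _).le
      have h2 := Real.log_le_log h h1
      rw [Real.log_mul hC.ne' (Real.exp_pos _).ne', Real.log_exp] at h2
      refine h2.trans ?_
      nlinarith [le_abs_self τ, le_abs_self (Real.log C), abs_nonneg (Real.log C)]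
  have key0 : ∀ δ ∈ D, 0 ≤ δ → ∀ a1 ∈ A (Real.pi / 2), ∀ a2 ∈ A (-(Real.pi / 2)),
      δ * (2 * Real.pi * Real.cos γ) ≤ a1 + a2 := by
    intro δ hδ hδ0 a1 ha1 a2 ha2
    have h1 := hAb _ a1 ha1
    have h2 := hAb _ a2 ha2
    have e1 : Complex.exp (((Real.pi / 2 : ℝ) : ℂ) * I) = I := by
      push_cast; exact Complex.exp_pi_div_two_mul_I
    have e2 : Complex.exp (((-(Real.pi / 2) : ℝ) : ℂ) * I) = -I := by
      push_cast; rw [← neg_div]; exact Complex.exp_neg_pi_div_two_mul_I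
    rw [e1] at h1
    rw [e2] at h2
    have hδ' : ∀ᶠ N : ℕ in atTop, δ * N ≤ (S N).card := by
      have := (tendsto_natCast_atTop_atTop (R := ℝ)).eventually hδ
      filter_upwards [this, eventually_gt_atTop 0] with N hN hN0
      have : (0:ℝ) < N := by exact_mod_cast hN0
      rw [hnc, le_div_iff₀ this] at hN
      exact hN
    have hall : ∀ ε : ℝ, 0 < ε → ε ≤ 1 →
        (1 - ε) * δ * Real.cos γ ≤ (a1 + a2) / (2 * Real.pi) := fun ε h h' =>
      main_bound f hfd C τ hb hf0 γ hγ Λ hΛ hzero S hS a1 a2 h1 h2 δ hδ0 hδ' _ hM ε h h' hcos.le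
    have hlim : δ * Real.cos γ ≤ (a1 + a2) / (2 * Real.pi) := by
      have ht : Tendsto (fun ε : ℝ => (1 - ε) * δ * Real.cos γ) (nhdsWithin 0 (Set.Ioi 0))
          (nhds (δ * Real.cos γ)) := by
        have : Continuous (fun ε : ℝ => (1 - ε) * δ * Real.cos γ) := by fun_prop
        have := this.tendsto 0
        simp only [sub_zero, one_mul] at this
        exact this.mono_left nhdsWithin_le_nhds
      refine le_of_tendsto ht ?_
      filter_upwards [Ioc_mem_nhdsGT (zero_lt_one (α := ℝ))] with ε hε
      exact hall ε hε.1 hε.2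
    rw [le_div_iff₀ (by positivity)] at hlim
    linarith
  have key : ∀ δ ∈ D, 0 ≤ δ → δ * (2 * Real.pi * Real.cos γ) ≤
      indicatorFn f (Real.pi / 2) + indicatorFn f (-(Real.pi / 2)) := by
    intro δ hδ hδ0
    rw [hind, hind]
    have h1 : ∀ a2 ∈ A (-(Real.pi / 2)), δ * (2 * Real.pi * Real.cos γ) - a2 ≤ sInf (A (Real.pi / 2)) :=
      fun a2 ha2 => le_csInf (hAne _) (fun a1 ha1 => by linarith [key0 δ hδ hδ0 a1 ha1 a2 ha2])
    have h2 : δ * (2 * Real.pi * Real.cos γ) - sInf (A (Real.pi / 2)) ≤ sInf (A (-(Real.pi / 2))) :=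
      le_csInf (hAne _) (fun a2 ha2 => by linarith [h1 a2 ha2])
    linarith
  refine csSup_le ⟨0, hD0⟩ (fun δ hδ => ?_)
  rcases le_total δ 0 with h | h
  · exact h.trans hrhs
  · rw [le_div_iff₀ (by positivity)]
    have := key δ hδ h
    have h2 := le_abs_self (indicatorFn f (Real.pi / 2) + indicatorFn f (-(Real.pi / 2)))
    linarith
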